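/- arXiv:2001.07151 — 2 statements merged into one kernel-verified Lean document; each statement's English description precedes it below -/
import Mathlib

section
/- For all integers i ≥ 2 and j ≥ 0 and all h > 0, J_{i,j}(h) = ((i−1)/(i+j+1)) · h · J_{i−2,j}(h) + (((−1)^{i+3j+5} − 1)/(i+j+1)) · σ(h)^{i+3j+5}. -/
/-!
The derivative of `cos^(k+1) θ * sin^(j+2) θ` is, after replacing `sin² θ` by `1 - cos² θ`, the
combination `(k+j+3) cos^(k+2) θ sin^(j+1) θ - (k+1) cos^k θ sin^(j+1) θ` of the integrands of
`J (k+2) j` and `J k j`. Integrating it over a half turn `[τ, τ + π]`, where `sin` and `cos` both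
change sign (`integral_cos_pow_mul_sin_pow_half_turn`), gives the reduction formula up to a boundary
term at `τ`. Since `(√h cos τ, √h sin τ) = (σ(h), σ(h)³)` is the intersection point of the circle
with the cubic (`sqrt_mul_cos_arctan`, `sqrt_mul_sin_arctan`), multiplying by `√h ^ (k+j+3)` turns
that boundary term into the stated power of `σ(h)`.
-/

open MeasureTheory intervalIntegral

/-- `τ(h) = arctan(σ(h)²)`, the angle of the intersection point of the circle
`x² + y² = h` with the switching curve `y = x³`. -/
noncomputable def tau (σ : ℝ → ℝ) (h : ℝ) : ℝ := Real.arctan ((σ h) ^ 2)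

/-- `J i j h = h^((i+j+1)/2) ∫_{τ(h)}^{τ(h)+π} cosⁱθ sin^{j+1}θ dθ = ∫_{L_h⁺} xⁱ yʲ dx`. -/
noncomputable def J (σ : ℝ → ℝ) (i j : ℕ) (h : ℝ) : ℝ :=
  h ^ (((i : ℝ) + (j : ℝ) + 1) / 2) *
    ∫ θ in tau σ h..(tau σ h + Real.pi), Real.cos θ ^ i * Real.sin θ ^ (j + 1)

/-- `I i j h = h^((i+j+1)/2) ∫_{τ(h)-π}^{τ(h)} cosⁱθ sin^{j+1}θ dθ = ∫_{L_h⁻} xⁱ yʲ dx`. -/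
noncomputable def I (σ : ℝ → ℝ) (i j : ℕ) (h : ℝ) : ℝ :=
  h ^ (((i : ℝ) + (j : ℝ) + 1) / 2) *
    ∫ θ in (tau σ h - Real.pi)..tau σ h, Real.cos θ ^ i * Real.sin θ ^ (j + 1)

/-- Reduction formula for the trigonometric integral over a half turn. -/
theorem integral_cos_pow_mul_sin_pow_half_turn (k j : ℕ) (t : ℝ) :
    ((k : ℝ) + j + 3) *
        ∫ θ in t..(t + Real.pi), Real.cos θ ^ (k + 2) * Real.sin θ ^ (j + 1) =
      ((k : ℝ) + 1) * (∫ θ in t..(t + Real.pi), Real.cos θ ^ k * Real.sin θ ^ (j + 1)) +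
        ((-1 : ℝ) ^ (k + j + 3) - 1) * (Real.cos t ^ (k + 1) * Real.sin t ^ (j + 2)) := by
  have hderiv : ∀ θ ∈ Set.uIcc t (t + Real.pi),
      HasDerivAt (fun θ => Real.cos θ ^ (k + 1) * Real.sin θ ^ (j + 2))
        (((k : ℝ) + j + 3) * (Real.cos θ ^ (k + 2) * Real.sin θ ^ (j + 1)) -
          ((k : ℝ) + 1) * (Real.cos θ ^ k * Real.sin θ ^ (j + 1))) θ := by
    intro θ _
    refine (((Real.hasDerivAt_cos θ).fun_pow (k + 1)).fun_mul
      ((Real.hasDerivAt_sin θ).fun_pow (j + 2))).congr_deriv ?_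
    simp only [Nat.add_sub_cancel, show j + 2 - 1 = j + 1 from rfl]
    push_cast
    linear_combination (-((k : ℝ) + 1) * Real.cos θ ^ k * Real.sin θ ^ (j + 1)) *
      Real.sin_sq_add_cos_sq θ
  have h_integrable : ∀ m : ℕ, IntervalIntegrable
      (fun θ => Real.cos θ ^ m * Real.sin θ ^ (j + 1)) volume t (t + Real.pi) := fun m =>
    Continuous.intervalIntegrable (by fun_prop) _ _
  have key := intervalIntegral.integral_eq_sub_of_hasDerivAt hderiv
    (((h_integrable (k + 2)).const_mul _).sub ((h_integrable k).const_mul _))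
  rw [intervalIntegral.integral_sub ((h_integrable (k + 2)).const_mul _) ((h_integrable k).const_mul _),
    intervalIntegral.integral_const_mul, intervalIntegral.integral_const_mul,
    Real.cos_add_pi, Real.sin_add_pi, neg_pow, neg_pow (Real.sin t)] at key
  linear_combination key

theorem sqrt_mul_cos_arctan {u h : ℝ} (hu : 0 < u) (huh : u ^ 2 + u ^ 6 = h) :
    √h * Real.cos (Real.arctan (u ^ 2)) = u := by
  have hs : √h = u * √(1 + (u ^ 2) ^ 2) := by
    rw [← huh, show u ^ 2 + u ^ 6 = u ^ 2 * (1 + (u ^ 2) ^ 2) by ring,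
      Real.sqrt_mul (by positivity), Real.sqrt_sq hu.le]
  have : 0 < √(1 + (u ^ 2) ^ 2) := by positivity
  rw [Real.cos_arctan, hs]
  field_simp

theorem sqrt_mul_sin_arctan {u h : ℝ} (hu : 0 < u) (huh : u ^ 2 + u ^ 6 = h) :
    √h * Real.sin (Real.arctan (u ^ 2)) = u ^ 3 := by
  have ht : Real.sin (Real.arctan (u ^ 2)) = u ^ 2 * Real.cos (Real.arctan (u ^ 2)) := by
    rw [Real.sin_arctan, Real.cos_arctan, mul_one_div]
  rw [ht]
  linear_combination u ^ 2 * sqrt_mul_cos_arctan hu huh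

/-- For `h ≥ 0` the half-integer power in the definition of `J` is a natural power of `√h`. -/
theorem J_eq_sqrt_pow (σ : ℝ → ℝ) (i j : ℕ) {h : ℝ} (hh : 0 ≤ h) :
    J σ i j h = √h ^ (i + j + 1) *
      ∫ θ in tau σ h..(tau σ h + Real.pi), Real.cos θ ^ i * Real.sin θ ^ (j + 1) := by
  rw [J, Real.rpow_div_two_eq_sqrt _ hh, ← Real.rpow_natCast]
  push_cast
  rfl

/-- Reduction formula (3.11): lowering the first index by 2. -/
theorem J_reduction_first_index (σ : ℝ → ℝ)
    (hσ : ∀ h : ℝ, 0 < h → 0 < σ h ∧ (σ h) ^ 2 + (σ h) ^ 6 = h)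
    (i j : ℕ) (hi : 2 ≤ i) (h : ℝ) (hh : 0 < h) :
    J σ i j h =
      (((i : ℝ) - 1) / ((i : ℝ) + (j : ℝ) + 1)) * h * J σ (i - 2) j h +
        (((-1 : ℝ) ^ (i + 3 * j + 5) - 1) / ((i : ℝ) + (j : ℝ) + 1)) *
          (σ h) ^ (i + 3 * j + 5) := by
  obtain ⟨k, rfl⟩ := Nat.exists_eq_add_of_le' hi
  obtain ⟨hu, huh⟩ := hσ h hh
  have hc : √h * Real.cos (tau σ h) = σ h := sqrt_mul_cos_arctan hu huh
  have hs : √h * Real.sin (tau σ h) = σ h ^ 3 := sqrt_mul_sin_arctan hu huh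
  have hbdry : √h ^ (k + j + 3) * (Real.cos (tau σ h) ^ (k + 1) * Real.sin (tau σ h) ^ (j + 2)) =
      σ h ^ (k + 2 + 3 * j + 5) := by
    calc _ = (√h * Real.cos (tau σ h)) ^ (k + 1) * (√h * Real.sin (tau σ h)) ^ (j + 2) := by ring
      _ = _ := by rw [hc, hs]; ring
  have hsign : (-1 : ℝ) ^ (k + 2 + 3 * j + 5) = (-1) ^ (k + j + 3) := by
    rw [show k + 2 + 3 * j + 5 = (k + j + 3) + 2 * (j + 2) by ring, pow_add, pow_mul]
    norm_num
  have hsq : √h ^ 2 = h := Real.sq_sqrt hh.le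
  have key := integral_cos_pow_mul_sin_pow_half_turn k j (tau σ h)
  rw [Nat.add_sub_cancel, J_eq_sqrt_pow σ (k + 2) j hh.le, J_eq_sqrt_pow σ k j hh.le, hsign,
    ← hbdry]
  generalize (∫ θ in tau σ h..(tau σ h + Real.pi),
    Real.cos θ ^ (k + 2) * Real.sin θ ^ (j + 1)) = A at key ⊢
  generalize (∫ θ in tau σ h..(tau σ h + Real.pi),
    Real.cos θ ^ k * Real.sin θ ^ (j + 1)) = B at key ⊢
  have hden : ((k + 2 : ℕ) : ℝ) + (j : ℝ) + 1 = (k : ℝ) + j + 3 := by push_cast; ring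
  have hpos : (k : ℝ) + j + 3 ≠ 0 := by positivity
  rw [hden]
  push_cast
  -- `√h` contains `h`, so only the leading factor `h` is to be rewritten as `√h ^ 2`.
  have hB : h * (√h ^ (k + j + 1) * B) = √h ^ (k + j + 3) * B := by
    nth_rewrite 1 [← hsq]
    ring
  rw [mul_assoc _ h, hB]
  field_simp
  linear_combination √h ^ (k + j + 3) * key
end

section
/- Let n ≥ 1 and let p⁺, q⁺, p⁻, q⁻ be real bivariate polynomials of total degree at most n. Then there exist real constants ρ⁺_{i,j}, ρ⁻_{i,j} (for 0 ≤ i + j ≤ n) and a real polynomial Φ of one variable with Φ(0) = 0 and deg Φ ≤ 3n + (5 + (−1)ⁿ)/2 such that for all h > 0, M(h) = Σ_{0 ≤ i+j ≤ n} ρ⁺_{i,j} J_{i,j}(h) + Σ_{0 ≤ i+j ≤ n} ρ⁻_{i,j} I_{i,j}(h) + Φ(σ(h)). -/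
/-!
Expanding the polynomials, `M(h)` is a linear combination of the line integrals of `xⁱ yʲ dx` and
`xⁱ yʲ dy` along the two arcs, with `i + j ≤ n`. The former are exactly `J i j` and `I i j`. For the
latter, integrating `d(xⁱ yʲ⁺¹)` along the arc (`integral_cos_sin`) gives
`∫ xⁱ yʲ dy = (j + 1)⁻¹ ([xⁱ yʲ⁺¹] - i ∫ xⁱ⁻¹ yʲ⁺¹ dx)`.
The endpoints of both arcs are the antipodal points `±(σ, σ³)`, so the boundary term is a multiple of
`σ ^ (i + 3 (j + 1))`, and it vanishes when `i + j` is odd. The largest exponent that survives is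
therefore `3 n + 3` for even `n` and `3 n` for odd `n`, which is within the claimed degree bound.
-/

open MeasureTheory intervalIntegral

/-- The first-order Melnikov function of the piecewise perturbed linear center with
switching curve `y = x³`, for perturbation polynomials `p⁺, q⁺, p⁻, q⁻`:
`M(h) = √h ∫_{τ(h)}^{τ(h)+π} (q⁺ sin θ + p⁺ cos θ) dθ
      + √h ∫_{τ(h)-π}^{τ(h)} (q⁻ sin θ + p⁻ cos θ) dθ`,
the polynomials being evaluated at `(√h cos θ, √h sin θ)`. -/
noncomputable def Mel (σ : ℝ → ℝ) (pp qp pm qm : MvPolynomial (Fin 2) ℝ) (h : ℝ) : ℝ :=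
  Real.sqrt h *
      (∫ θ in tau σ h..(tau σ h + Real.pi),
        MvPolynomial.eval ![Real.sqrt h * Real.cos θ, Real.sqrt h * Real.sin θ] qp *
            Real.sin θ +
          MvPolynomial.eval ![Real.sqrt h * Real.cos θ, Real.sqrt h * Real.sin θ] pp *
            Real.cos θ) +
    Real.sqrt h *
      (∫ θ in (tau σ h - Real.pi)..tau σ h,
        MvPolynomial.eval ![Real.sqrt h * Real.cos θ, Real.sqrt h * Real.sin θ] qm *
            Real.sin θ +
          MvPolynomial.eval ![Real.sqrt h * Real.cos θ, Real.sqrt h * Real.sin θ] pm *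
            Real.cos θ)

/-- `F` agrees on `(0, ∞)` with a linear combination of the `J i j` and `I i j`, `i + j ≤ n`, plus a
polynomial in `σ` of degree at most `D` without constant term. -/
def MelRep (σ : ℝ → ℝ) (n D : ℕ) (F : ℝ → ℝ) : Prop :=
  ∃ (ρp ρm : ℕ → ℕ → ℝ) (Φ : Polynomial ℝ),
    Φ.eval 0 = 0 ∧ Φ.natDegree ≤ D ∧
    ∀ h : ℝ, 0 < h →
      F h =
        (∑ i ∈ Finset.range (n + 1), ∑ j ∈ Finset.range (n + 1 - i), ρp i j * J σ i j h) +
          (∑ i ∈ Finset.range (n + 1), ∑ j ∈ Finset.range (n + 1 - i), ρm i j * I σ i j h) +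
          Φ.eval (σ h)

namespace MelRep

variable {σ : ℝ → ℝ} {n D : ℕ} {F G : ℝ → ℝ}

lemma congr (hF : MelRep σ n D F) (hFG : ∀ h, 0 < h → G h = F h) : MelRep σ n D G := by
  obtain ⟨a, b, Φ, h0, hd, hF⟩ := hF
  exact ⟨a, b, Φ, h0, hd, fun h hh => (hFG h hh).trans (hF h hh)⟩

lemma zero : MelRep σ n D (fun _ => 0) :=
  ⟨fun _ _ => 0, fun _ _ => 0, 0, by simp, by simp, by simp⟩

lemma add (hF : MelRep σ n D F) (hG : MelRep σ n D G) : MelRep σ n D (fun h => F h + G h) := by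
  obtain ⟨a, b, Φ, h0, hd, hF⟩ := hF
  obtain ⟨a', b', Φ', h0', hd', hG⟩ := hG
  refine ⟨fun i j => a i j + a' i j, fun i j => b i j + b' i j, Φ + Φ', by simp [h0, h0'],
    (Polynomial.natDegree_add_le _ _).trans (max_le hd hd'), fun h hh => ?_⟩
  simp only [hF h hh, hG h hh, add_mul, Finset.sum_add_distrib, Polynomial.eval_add]
  ring

lemma smul (c : ℝ) (hF : MelRep σ n D F) : MelRep σ n D (fun h => c * F h) := by
  obtain ⟨a, b, Φ, h0, hd, hF⟩ := hF
  refine ⟨fun i j => c * a i j, fun i j => c * b i j, Polynomial.C c * Φ, by simp [h0],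
    (Polynomial.natDegree_C_mul_le _ _).trans hd, fun h hh => ?_⟩
  simp only [hF h hh, mul_add, Finset.mul_sum, mul_assoc, Polynomial.eval_mul, Polynomial.eval_C]

lemma sum {ι : Type*} (s : Finset ι) {f : ι → ℝ → ℝ} (hf : ∀ d ∈ s, MelRep σ n D (f d)) :
    MelRep σ n D (fun h => ∑ d ∈ s, f d h) := by
  classical
  induction s using Finset.induction_on with
  | empty => simpa using zero
  | insert a s ha ih =>
    refine ((hf a (by simp)).add (ih fun d hd => hf d (by simp [hd]))).congr fun h _ => ?_
    rw [Finset.sum_insert ha]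

/-- The double sum in `MelRep` with coefficients concentrated at `(i, j)`. -/
lemma sum_single (K : ℕ → ℕ → ℝ) {i j : ℕ} (hij : i + j ≤ n) :
    ∑ i' ∈ Finset.range (n + 1), ∑ j' ∈ Finset.range (n + 1 - i'),
      (if i' = i then if j' = j then (1 : ℝ) else 0 else 0) * K i' j' = K i j := by
  rw [Finset.sum_eq_single_of_mem i (by simp; omega) (by intro b _ hb; simp [hb]),
    Finset.sum_eq_single_of_mem j (by simp; omega) (by intro b _ hb; simp [hb])]
  simp

lemma ofJ {i j : ℕ} (hij : i + j ≤ n) : MelRep σ n D (J σ i j) :=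
  ⟨fun i' j' => if i' = i then if j' = j then 1 else 0 else 0, fun _ _ => 0, 0, by simp, by simp,
    fun h _ => by rw [sum_single (fun i j => J σ i j h) hij]; simp⟩

lemma ofI {i j : ℕ} (hij : i + j ≤ n) : MelRep σ n D (I σ i j) :=
  ⟨fun _ _ => 0, fun i' j' => if i' = i then if j' = j then 1 else 0 else 0, 0, by simp, by simp,
    fun h _ => by rw [sum_single (fun i j => I σ i j h) hij]; simp⟩

lemma ofPow {k : ℕ} (hk : k ≠ 0) (hkD : k ≤ D) : MelRep σ n D (fun h => σ h ^ k) :=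
  ⟨fun _ _ => 0, fun _ _ => 0, Polynomial.X ^ k, by simp [hk], by simpa using hkD, by simp⟩

end MelRep

/-- Integration of `d(cosⁱ sinʲ⁺¹)`. For `i = 0` the truncated exponent `i - 1` is harmless, since
its integral is multiplied by `i`. -/
lemma integral_cos_sin (i j : ℕ) (a b : ℝ) :
    ∫ θ in a..b, Real.cos θ ^ (i + 1) * Real.sin θ ^ j =
      ((j : ℝ) + 1)⁻¹ * ((Real.cos b ^ i * Real.sin b ^ (j + 1) -
        Real.cos a ^ i * Real.sin a ^ (j + 1)) +
        i * ∫ θ in a..b, Real.cos θ ^ (i - 1) * Real.sin θ ^ (j + 1 + 1)) := by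
  have hint : ∀ k l : ℕ, IntervalIntegrable
      (fun θ => Real.cos θ ^ k * Real.sin θ ^ l) volume a b :=
    fun k l => (by fun_prop : Continuous _).intervalIntegrable _ _
  have hderiv : ∀ θ : ℝ, HasDerivAt (fun θ => Real.cos θ ^ i * Real.sin θ ^ (j + 1))
      (((j : ℝ) + 1) * (Real.cos θ ^ (i + 1) * Real.sin θ ^ j) -
        i * (Real.cos θ ^ (i - 1) * Real.sin θ ^ (j + 1 + 1))) θ := by
    intro θ
    refine (((Real.hasDerivAt_cos θ).pow i).mul
      ((Real.hasDerivAt_sin θ).pow (j + 1))).congr_deriv ?_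
    simp only [Pi.pow_apply, Nat.add_sub_cancel, Nat.cast_add, Nat.cast_one]
    ring
  have key := integral_eq_sub_of_hasDerivAt (fun θ _ => hderiv θ)
    (((hint (i + 1) j).const_mul _).sub ((hint (i - 1) (j + 1 + 1)).const_mul _))
  rw [integral_sub ((hint (i + 1) j).const_mul _) ((hint (i - 1) (j + 1 + 1)).const_mul _),
    intervalIntegral.integral_const_mul, intervalIntegral.integral_const_mul] at key
  rw [← key]
  field_simp
  ring

/-- Monomial expansion of the line integral `∫ q dx - p dy` over an arc. -/
lemma arc_expand (p q : MvPolynomial (Fin 2) ℝ) (a b r : ℝ) :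
    r * (∫ θ in a..b,
        MvPolynomial.eval ![r * Real.cos θ, r * Real.sin θ] q * Real.sin θ +
          MvPolynomial.eval ![r * Real.cos θ, r * Real.sin θ] p * Real.cos θ) =
      (∑ d ∈ q.support, q.coeff d *
        (r ^ (d 0 + d 1 + 1) * ∫ θ in a..b, Real.cos θ ^ d 0 * Real.sin θ ^ (d 1 + 1))) +
      ∑ d ∈ p.support, p.coeff d *
        (r ^ (d 0 + d 1 + 1) * ∫ θ in a..b, Real.cos θ ^ (d 0 + 1) * Real.sin θ ^ d 1) := by
  simp only [← intervalIntegral.integral_const_mul]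
  rw [← intervalIntegral.integral_finsetSum, ← intervalIntegral.integral_finsetSum,
    ← intervalIntegral.integral_add]
  · refine integral_congr fun θ _ => ?_
    simp only [MvPolynomial.eval_eq', Fin.prod_univ_two, Matrix.cons_val_zero, Matrix.cons_val_one,
      mul_add, Finset.sum_mul, Finset.mul_sum]
    congr 1 <;> refine Finset.sum_congr rfl fun d _ => ?_ <;> ring
  all_goals
    intros
    exact (by fun_prop : Continuous _).intervalIntegrable _ _

lemma rpow_half_eq_sqrt_pow {h : ℝ} (hh : 0 < h) (i j : ℕ) :
    h ^ (((i : ℝ) + (j : ℝ) + 1) / 2) = Real.sqrt h ^ (i + j + 1) := by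
  rw [Real.sqrt_eq_rpow, ← Real.rpow_natCast, ← Real.rpow_mul hh.le]
  congr 1
  push_cast
  ring

/-- The point of the circle `x² + y² = h` at angle `τ(h)` is `(σ(h), σ(h)³)`. -/
lemma sqrt_mul_cos_sin_tau {σ : ℝ → ℝ} {h : ℝ} (hpos : 0 < σ h)
    (heq : σ h ^ 2 + σ h ^ 6 = h) :
    Real.sqrt h * Real.cos (tau σ h) = σ h ∧ Real.sqrt h * Real.sin (tau σ h) = σ h ^ 3 := by
  have hs : Real.sqrt h = σ h * Real.sqrt (1 + (σ h ^ 2) ^ 2) := by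
    have hprod : h = σ h ^ 2 * (1 + (σ h ^ 2) ^ 2) := by linear_combination -heq
    rw [congrArg Real.sqrt hprod, Real.sqrt_mul (by positivity), Real.sqrt_sq hpos.le]
  have hne : Real.sqrt (1 + (σ h ^ 2) ^ 2) ≠ 0 := by positivity
  rw [tau, Real.cos_arctan, Real.sin_arctan, hs]
  constructor <;> field_simp

/-- A `dy`-monomial over an arc is representable: its endpoint contribution is a
multiple of a power of `σ`, and the rest is a multiple of the `dx`-integral `K (i - 1) (j + 1)`. The
functions `A`, `B` are the end angles of the arc; `e` is `1` if `A = τ` and `-1` if `B = τ`. -/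
lemma rep_cos_term {σ : ℝ → ℝ} {n D i j : ℕ}
    (hσ : ∀ h : ℝ, 0 < h → 0 < σ h ∧ (σ h) ^ 2 + (σ h) ^ 6 = h)
    (hij : i + j ≤ n) (hD : Even (i + j) → i + 3 * (j + 1) ≤ D)
    (A B : ℝ → ℝ) (K : ℕ → ℕ → ℝ → ℝ) (e : ℝ)
    (hK : ∀ {i j : ℕ}, i + j ≤ n → MelRep σ n D (K i j))
    (hKeq : ∀ i j h, 0 < h → K i j h = Real.sqrt h ^ (i + j + 1) *
      ∫ θ in A h..B h, Real.cos θ ^ i * Real.sin θ ^ (j + 1))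
    (hbd : ∀ h, Real.cos (B h) ^ i * Real.sin (B h) ^ (j + 1) -
        Real.cos (A h) ^ i * Real.sin (A h) ^ (j + 1) =
      e * ((-1) ^ (i + j + 1) - 1) *
        (Real.cos (tau σ h) ^ i * Real.sin (tau σ h) ^ (j + 1))) :
    MelRep σ n D (fun h => Real.sqrt h ^ (i + j + 1) *
      ∫ θ in A h..B h, Real.cos θ ^ (i + 1) * Real.sin θ ^ j) := by
  have hpow : MelRep σ n D
      (fun h => (e * ((-1) ^ (i + j + 1) - 1)) * σ h ^ (i + 3 * (j + 1))) := by
    rcases Nat.even_or_odd (i + j) with hev | hodd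
    · exact (MelRep.ofPow (by omega) (hD hev)).smul _
    · refine MelRep.zero.congr fun h _ => ?_
      rw [hodd.add_one.neg_one_pow]
      ring
  have hrest : MelRep σ n D (fun h => (i : ℝ) * K (i - 1) (j + 1) h) := by
    rcases Nat.eq_zero_or_pos i with rfl | hi
    · exact MelRep.zero.congr (by simp)
    · exact (hK (by omega)).smul _
  refine ((hpow.add hrest).smul ((j : ℝ) + 1)⁻¹).congr fun h hh => ?_
  obtain ⟨hc, hs⟩ := sqrt_mul_cos_sin_tau (hσ h hh).1 (hσ h hh).2
  have hpt : σ h ^ (i + 3 * (j + 1)) = Real.sqrt h ^ (i + j + 1) *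
      (Real.cos (tau σ h) ^ i * Real.sin (tau σ h) ^ (j + 1)) := by
    rw [pow_add, pow_mul, ← hs]
    nth_rewrite 1 [← hc]
    ring
  have hrec : (i : ℝ) * K (i - 1) (j + 1) h = Real.sqrt h ^ (i + j + 1) * (i *
      ∫ θ in A h..B h, Real.cos θ ^ (i - 1) * Real.sin θ ^ (j + 1 + 1)) := by
    rcases Nat.eq_zero_or_pos i with rfl | hi
    · simp
    · rw [hKeq _ _ h hh, show i - 1 + (j + 1) + 1 = i + j + 1 by omega]
      ring
  rw [integral_cos_sin, hbd, hpt, hrec]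
  ring

/-- The Melnikov contribution of one arc is representable; `hD` says that `D` bounds every surviving
boundary exponent. -/
lemma rep_arc {σ : ℝ → ℝ} {n D : ℕ}
    (hσ : ∀ h : ℝ, 0 < h → 0 < σ h ∧ (σ h) ^ 2 + (σ h) ^ 6 = h)
    (hD : ∀ i j : ℕ, i + j ≤ n → Even (i + j) → i + 3 * (j + 1) ≤ D)
    {p q : MvPolynomial (Fin 2) ℝ} (hp : p.totalDegree ≤ n) (hq : q.totalDegree ≤ n)
    (A B : ℝ → ℝ) (K : ℕ → ℕ → ℝ → ℝ) (e : ℝ)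
    (hK : ∀ {i j : ℕ}, i + j ≤ n → MelRep σ n D (K i j))
    (hKeq : ∀ i j h, 0 < h → K i j h = Real.sqrt h ^ (i + j + 1) *
      ∫ θ in A h..B h, Real.cos θ ^ i * Real.sin θ ^ (j + 1))
    (hbd : ∀ i j h, Real.cos (B h) ^ i * Real.sin (B h) ^ (j + 1) -
        Real.cos (A h) ^ i * Real.sin (A h) ^ (j + 1) =
      e * ((-1) ^ (i + j + 1) - 1) *
        (Real.cos (tau σ h) ^ i * Real.sin (tau σ h) ^ (j + 1))) :
    MelRep σ n D (fun h => Real.sqrt h * (∫ θ in A h..B h,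
        MvPolynomial.eval ![Real.sqrt h * Real.cos θ, Real.sqrt h * Real.sin θ] q * Real.sin θ +
          MvPolynomial.eval ![Real.sqrt h * Real.cos θ, Real.sqrt h * Real.sin θ] p *
            Real.cos θ)) := by
  have hdeg : ∀ {r : MvPolynomial (Fin 2) ℝ}, r.totalDegree ≤ n →
      ∀ d ∈ r.support, d 0 + d 1 ≤ n := by
    intro r hr d hd
    have := (MvPolynomial.le_totalDegree hd).trans hr
    rwa [Finsupp.sum_fintype _ _ (fun _ => rfl), Fin.sum_univ_two] at this
  simp only [arc_expand]
  refine (MelRep.sum _ fun d hd => ?_).add (MelRep.sum _ fun d hd => ?_)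
  · exact ((hK (hdeg hq d hd)).congr fun h hh => (hKeq _ _ h hh).symm).smul _
  · exact (rep_cos_term hσ (hdeg hp d hd) (hD _ _ (hdeg hp d hd)) A B K e hK hKeq
      (hbd _ _)).smul _

/-- Lemma 3.1: algebraic structure of the first-order Melnikov function. -/
theorem Mel_algebraic_structure (n : ℕ) (hn : 1 ≤ n) (σ : ℝ → ℝ)
    (hσ : ∀ h : ℝ, 0 < h → 0 < σ h ∧ (σ h) ^ 2 + (σ h) ^ 6 = h)
    (pp qp pm qm : MvPolynomial (Fin 2) ℝ)
    (hpp : pp.totalDegree ≤ n) (hqp : qp.totalDegree ≤ n)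
    (hpm : pm.totalDegree ≤ n) (hqm : qm.totalDegree ≤ n) :
    ∃ (ρp ρm : ℕ → ℕ → ℝ) (Φ : Polynomial ℝ),
      Φ.eval 0 = 0 ∧
      (Φ.natDegree : ℤ) ≤ 3 * (n : ℤ) + (5 + (-1 : ℤ) ^ n) / 2 ∧
      ∀ h : ℝ, 0 < h →
        Mel σ pp qp pm qm h =
          (∑ i ∈ Finset.range (n + 1), ∑ j ∈ Finset.range (n + 1 - i),
              ρp i j * J σ i j h) +
            (∑ i ∈ Finset.range (n + 1), ∑ j ∈ Finset.range (n + 1 - i),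
              ρm i j * I σ i j h) +
            Φ.eval (σ h) := by
  obtain ⟨D, hDn, hD⟩ : ∃ D : ℕ, (D : ℤ) ≤ 3 * (n : ℤ) + (5 + (-1 : ℤ) ^ n) / 2 ∧
      ∀ i j : ℕ, i + j ≤ n → Even (i + j) → i + 3 * (j + 1) ≤ D := by
    rcases Nat.even_or_odd n with hev | hodd
    · refine ⟨3 * n + 3, by rw [hev.neg_one_pow]; push_cast; omega, fun i j h _ => by omega⟩
    · refine ⟨3 * n + 2, by rw [hodd.neg_one_pow]; push_cast; omega, fun i j h he => ?_⟩
      -- `i + j` is even and `n` is odd, so `i + j ≤ n - 1`.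
      obtain ⟨a, ha⟩ := he
      obtain ⟨b, hb⟩ := hodd
      omega
  have hJ := rep_arc hσ hD hpp hqp (fun h => tau σ h) (fun h => tau σ h + Real.pi) (J σ) 1
    MelRep.ofJ (fun i j h hh => by rw [J, rpow_half_eq_sqrt_pow hh]) (fun i j h => by
      rw [Real.cos_add_pi, Real.sin_add_pi, neg_pow (Real.cos _), neg_pow (Real.sin _)]
      ring)
  have hI := rep_arc hσ hD hpm hqm (fun h => tau σ h - Real.pi) (fun h => tau σ h) (I σ) (-1)
    MelRep.ofI (fun i j h hh => by rw [I, rpow_half_eq_sqrt_pow hh]) (fun i j h => by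
      rw [Real.cos_sub_pi, Real.sin_sub_pi, neg_pow (Real.cos _), neg_pow (Real.sin _)]
      ring)
  obtain ⟨ρp, ρm, Φ, h0, hd, hM⟩ := hJ.add hI
  exact ⟨ρp, ρm, Φ, h0, (by exact_mod_cast hd : (Φ.natDegree : ℤ) ≤ D).trans hDn, hM⟩
end
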